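/- Let (S,𝔪) be an unramified regular local ring of mixed characteristic p ≥ 3. Assume S[ω] and S[μ] are integrally closed (i.e. f,g ∉ S^{p∧p²}), h₁ ≠ 0, h₂ ≠ 0, that fg^i ∈ S^{p∧p²} for some 1 ≤ i ≤ p−1, and that the ideal (p,f,g) of S has grade three. Set P := (p, ω−h₁, μ−h₂)A and m := ωμ^i − h₁h₂^i ∈ A. Then the colon ideal ((pA + P^p) :_A m) equals pA + P^{p−1}. -/

import Mathlib

set_option synthInstance.maxHeartbeats 1000000
set_option maxHeartbeats 1600000

/-- A height one prime ideal of a commutative ring. -/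
def IsHeightOnePrime {S : Type*} [CommRing S] (P : Ideal S) : Prop :=
  ∃ hP : P.IsPrime, Order.height (⟨P, hP⟩ : PrimeSpectrum S) = 1

/-- `c ∈ S` is square free if `P S_P = c S_P` for every height one prime `P` containing `c`. -/
def PaperSquarefree {S : Type*} [CommRing S] (c : S) : Prop :=
  ∀ (P : Ideal S) (hP : P.IsPrime), Order.height (⟨P, hP⟩ : PrimeSpectrum S) = 1 → c ∈ P →
    haveI := hP
    Ideal.map (algebraMap S (Localization.AtPrime P)) P =
      Ideal.span {algebraMap S (Localization.AtPrime P) c}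

/-- Two elements satisfy `𝒜₁` if no height one prime contains both of them. -/
def SatisfiesA1 {S : Type*} [CommRing S] (f g : S) : Prop :=
  ∀ P : Ideal S, IsHeightOnePrime P → ¬(f ∈ P ∧ g ∈ P)

/-- The depth of a module over a local ring: the supremum of the lengths of
regular sequences on `M` contained in the maximal ideal. -/
noncomputable def modDepth (S : Type*) [CommRing S] [IsLocalRing S]
    (M : Type*) [AddCommGroup M] [Module S M] : ℕ∞ :=
  sSup {n : ℕ∞ | ∃ rs : List S, (rs.length : ℕ∞) = n ∧
    (∀ r ∈ rs, r ∈ IsLocalRing.maximalIdeal S) ∧ RingTheory.Sequence.IsRegular M rs}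

/-- A commutative ring is Cohen-Macaulay if each of its localizations at a prime
has depth equal to its Krull dimension. -/
def IsCMRing (R : Type*) [CommRing R] : Prop :=
  ∀ (Q : Ideal R) (hQ : Q.IsPrime),
    haveI := hQ
    (modDepth (Localization.AtPrime Q) (Localization.AtPrime Q) : WithBot ℕ∞) =
      ringKrullDim (Localization.AtPrime Q)

/-- The `n`-th symbolic power of a prime ideal `P`, i.e. `Pⁿ A_P ∩ A`. -/
noncomputable def symbPow {A : Type*} [CommRing A] (P : Ideal A) (hP : P.IsPrime) (n : ℕ) :
    Ideal A :=
  haveI := hP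
  Ideal.comap (algebraMap A (Localization.AtPrime P))
    (Ideal.map (algebraMap A (Localization.AtPrime P)) (P ^ n))

/-- `ω`, as an element of the subalgebra `A = S[ω,μ]`. -/
noncomputable def omegaA {S : Type*} [CommRing S] {K : Type*} [Field K] [Algebra S K]
    (ω μ : K) : Algebra.adjoin S ({ω, μ} : Set K) :=
  ⟨ω, Algebra.subset_adjoin (Set.mem_insert _ _)⟩

/-- `μ`, as an element of the subalgebra `A = S[ω,μ]`. -/
noncomputable def muA {S : Type*} [CommRing S] {K : Type*} [Field K] [Algebra S K]
    (ω μ : K) : Algebra.adjoin S ({ω, μ} : Set K) :=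
  ⟨μ, Algebra.subset_adjoin (Set.mem_insert_of_mem _ rfl)⟩

/-- The ideal `P = (p, ω−h₁, μ−h₂)` of `A = S[ω,μ]`. -/
noncomputable def Pid {S : Type*} [CommRing S] {K : Type*} [Field K] [Algebra S K]
    (p : ℕ) (ω μ : K) (h₁ h₂ : S) : Ideal (Algebra.adjoin S ({ω, μ} : Set K)) :=
  Ideal.span {(p : Algebra.adjoin S ({ω, μ} : Set K)),
    omegaA ω μ - algebraMap S _ h₁, muA ω μ - algebraMap S _ h₂}

/-- The colon module `(A :_K N) = {x ∈ K : x·N ⊆ A}`, as an `S`-submodule of `K`. -/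
noncomputable def colonSubmodule (S : Type*) [CommRing S] (K : Type*) [Field K] [Algebra S K]
    (A : Subalgebra S K) (N : Set K) : Submodule S K where
  carrier := {x : K | ∀ z ∈ N, x * z ∈ A}
  add_mem' := fun hx hy z hz => by
    simpa [add_mul] using add_mem (hx z hz) (hy z hz)
  zero_mem' := fun z hz => by simpa using A.zero_mem
  smul_mem' := fun c x hx z hz => by
    rw [Algebra.smul_def, mul_assoc]
    exact mul_mem (A.algebraMap_mem c) (hx z hz)

/-- `M` admits a free resolution `0 → Sⁿ → Sᵐ → M → 0`; for a finitely generated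
module over a Noetherian local ring this says exactly `pd_S(M) ≤ 1`. -/
def HasFreeResLengthLE1 (S : Type*) [CommRing S] (M : Type*) [AddCommGroup M] [Module S M] :
    Prop :=
  ∃ (n m : ℕ) (φ : (Fin n → S) →ₗ[S] (Fin m → S)) (ψ : (Fin m → S) →ₗ[S] M),
    Function.Injective φ ∧ Function.Surjective ψ ∧ LinearMap.range φ = LinearMap.ker ψ

/-- The ideal `Q` contains an `S`-regular sequence of length three, i.e. `Q` has grade
(at least) three. -/
def ContainsRegSeq3 (S : Type*) [CommRing S] (Q : Ideal S) : Prop :=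
  ∃ rs : List S, rs.length = 3 ∧ (∀ r ∈ rs, r ∈ Q) ∧ RingTheory.Sequence.IsRegular S rs


theorem aux_not_mem {S : Type*} [CommRing S] {I q : Ideal S} {r : S}
    (hr : IsSMulRegular (S ⧸ I) r) (hq : q ∈ I.minimalPrimes) : r ∉ q := by
  intro h
  obtain ⟨y, hy, hxy⟩ := Ideal.exists_mul_mem_of_mem_minimalPrimes hq h
  apply hy
  have h2 : r • (Ideal.Quotient.mk I y) = 0 := by
    rw [← Ideal.Quotient.eq_zero_iff_mem] at hxy
    rw [← hxy, Algebra.smul_def]; simp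
  exact Ideal.Quotient.eq_zero_iff_mem.1 (hr.right_eq_zero_of_smul h2)

theorem aux_grade {S : Type*} [CommRing S] [IsDomain S] [IsNoetherianRing S]
    {u v : S} (hI : Ideal.span {u, v} ≠ ⊤) (rs : List S) (h3 : rs.length = 3)
    (hmem : ∀ r ∈ rs, r ∈ Ideal.span {u, v}) (hreg : RingTheory.Sequence.IsRegular S rs) :
    False := by
  obtain ⟨q, hq⟩ := Ideal.nonempty_minimalPrimes hI
  have hqh : q.height ≤ 2 := by
    refine (Ideal.height_le_card_of_mem_minimalPrimes_span (Set.toFinite _) hq).trans ?_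
    have h := Set.ncard_insert_le u {v}
    rw [Set.ncard_singleton] at h
    exact_mod_cast h
  have hqp : q.IsPrime := hq.1.1
  have hle : ∀ r ∈ rs, r ∈ q := fun r hr => hq.1.2 (hmem r hr)
  obtain ⟨x, y, z, rfl⟩ := List.length_eq_three.1 h3
  have r0 := hreg.regular_mod_prev 0 (by simp)
  have r1 := hreg.regular_mod_prev 1 (by simp)
  have r2 := hreg.regular_mod_prev 2 (by simp)
  have top : ∀ I : Ideal S, I • (⊤ : Submodule S S) = I := fun I => by simp
  rw [top] at r0 r1 r2
  simp only [List.take_zero, List.take_succ_cons, List.getElem_cons_zero,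
    List.getElem_cons_succ] at r0 r1 r2
  have hx : x ∈ q := hle x (by simp)
  have hy : y ∈ q := hle y (by simp)
  have hz : z ∈ q := hle z (by simp)
  have l2 : Ideal.ofList [x, y] ≤ q := by
    simp [Ideal.ofList_cons, Ideal.span_le, hx, hy]
  obtain ⟨q2, hq2, hq2le⟩ := Ideal.exists_minimalPrimes_le l2
  have hp2 : q2.IsPrime := hq2.1.1
  have l1 : Ideal.ofList [x] ≤ q2 := by
    refine le_trans ?_ hq2.1.2
    simp [Ideal.ofList_cons]
  obtain ⟨q1, hq1, hq1le⟩ := Ideal.exists_minimalPrimes_le l1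
  have hp1 : q1.IsPrime := hq1.1.1
  have l0 : Ideal.ofList ([] : List S) ≤ q1 := by simp
  obtain ⟨q0, hq0, hq0le⟩ := Ideal.exists_minimalPrimes_le l0
  have hp0 : q0.IsPrime := hq0.1.1
  have lt2 : q2 < q := lt_of_le_of_ne hq2le (fun h => aux_not_mem r2 hq2 (h ▸ hz))
  have hy2 : y ∈ q2 := hq2.1.2 (by
    simp only [Ideal.ofList]; exact Ideal.subset_span (by simp))
  have hx1 : x ∈ q1 := hq1.1.2 (by
    simp only [Ideal.ofList]; exact Ideal.subset_span (by simp))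
  have lt1 : q1 < q2 := lt_of_le_of_ne hq1le (fun h => aux_not_mem r1 hq1 (h ▸ hy2))
  have lt0 : q0 < q1 := lt_of_le_of_ne hq0le (fun h => aux_not_mem r0 hq0 (h ▸ hx1))
  have a0 := Ideal.height_add_one_le_of_lt_of_isPrime lt0
  have a1 := Ideal.height_add_one_le_of_lt_of_isPrime lt1
  have a2 := Ideal.height_add_one_le_of_lt_of_isPrime lt2
  have b1 : (1 : ℕ∞) ≤ q1.height := le_trans (by simp) a0
  have b2 : (1 : ℕ∞) + 1 ≤ q2.height := le_trans (by gcongr) a1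
  have b3 : (1 : ℕ∞) + 1 + 1 ≤ q.height := le_trans (by gcongr) a2
  have := b3.trans hqh
  norm_num at this

theorem aux_reduce {R B : Type*} [CommRing R] [CommRing B] [Algebra R B] {p : ℕ} (hp : 0 < p)
    (f g : R) (W U : B) (hgen : Algebra.adjoin R {W, U} = ⊤) (x : B) :
    ∃ c : Fin p × Fin p → R, x - ∑ j, c j • (W ^ (j.1 : ℕ) * U ^ (j.2 : ℕ)) ∈
      Ideal.span {W ^ p - algebraMap R B f, U ^ p - algebraMap R B g} := by
  set I := Ideal.span {W ^ p - algebraMap R B f, U ^ p - algebraMap R B g} with hI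
  have hx : x ∈ Submodule.span R (Submonoid.closure {W, U} : Set B) := by
    rw [← Algebra.adjoin_eq_span, hgen]; trivial
  induction hx using Submodule.span_induction with
  | mem y hy =>
    obtain ⟨m, n, rfl⟩ := (Submonoid.mem_closure_pair _ _ _).1 hy
    refine ⟨Pi.single (⟨m % p, Nat.mod_lt _ hp⟩, ⟨n % p, Nat.mod_lt _ hp⟩)
      (f ^ (m / p) * g ^ (n / p)), ?_⟩
    rw [Finset.sum_eq_single (⟨m % p, Nat.mod_lt _ hp⟩, ⟨n % p, Nat.mod_lt _ hp⟩)]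
    · rw [← Ideal.Quotient.eq, Pi.single_eq_same]
      have h1 : Ideal.Quotient.mk I W ^ p = Ideal.Quotient.mk I (algebraMap R B f) := by
        rw [← map_pow, Ideal.Quotient.eq]; exact Ideal.subset_span (by simp)
      have h2 : Ideal.Quotient.mk I U ^ p = Ideal.Quotient.mk I (algebraMap R B g) := by
        rw [← map_pow, Ideal.Quotient.eq]; exact Ideal.subset_span (by simp)
      rw [Algebra.smul_def]
      simp only [map_mul, map_pow, ← h1, ← h2]
      conv_lhs => rw [← Nat.mod_add_div m p, ← Nat.mod_add_div n p]
      simp only [pow_add, pow_mul]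
      ring
    · intro b _ hb
      simp [Pi.single_eq_of_ne hb]
    · simp
  | zero => exact ⟨0, by simp⟩
  | add x y _ _ hx hy =>
    obtain ⟨c, hc⟩ := hx
    obtain ⟨d, hd⟩ := hy
    refine ⟨c + d, ?_⟩
    convert I.add_mem hc hd using 1
    simp only [Pi.add_apply, add_smul, Finset.sum_add_distrib]
    ring
  | smul a x _ hx =>
    obtain ⟨c, hc⟩ := hx
    refine ⟨a • c, ?_⟩
    convert I.mul_mem_left (algebraMap R B a) hc using 1
    rw [mul_sub, Finset.mul_sum, Algebra.smul_def]
    simp [Algebra.smul_def, mul_assoc]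

theorem aux_order {R : Type*} [CommRing R] [IsDomain R] (c₁ c₂ : R) (hc : c₂ ≠ 0) (i n : ℕ)
    (G : MvPolynomial (Fin 2) R)
    (h : G * ((MvPolynomial.X 0 + MvPolynomial.C c₁) * (MvPolynomial.X 1 + MvPolynomial.C c₂) ^ i
      - MvPolynomial.C (c₁ * c₂ ^ i)) ∈ MvPolynomial.idealOfVars (Fin 2) R ^ (n + 1)) :
    G ∈ MvPolynomial.idealOfVars (Fin 2) R ^ n := by
  set M : MvPolynomial (Fin 2) R := ((MvPolynomial.X 0 + MvPolynomial.C c₁) * (MvPolynomial.X 1 + MvPolynomial.C c₂) ^ i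
      - MvPolynomial.C (c₁ * c₂ ^ i)) with hM
  have key : ∀ (k : ℕ) (F : MvPolynomial (Fin 2) R), F ∈ MvPolynomial.idealOfVars (Fin 2) R ^ k ↔
      (k : ℕ∞) ≤ (F : MvPowerSeries (Fin 2) R).order := by
    intro k F
    rw [MvPolynomial.mem_pow_idealOfVars_iff']
    constructor
    · intro h
      exact MvPowerSeries.nat_le_order (fun d hd => by simpa using h d hd)
    · intro h d hd
      have := MvPowerSeries.coeff_of_lt_order (f := (F : MvPowerSeries (Fin 2) R)) (d := d)
        (lt_of_lt_of_le (by exact_mod_cast hd) h)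
      simpa using this
  have hM2 : M ∉ MvPolynomial.idealOfVars (Fin 2) R ^ 2 := by
    intro h2
    let e : MvPolynomial (Fin 2) R →ₐ[R] Polynomial R := MvPolynomial.aeval ![Polynomial.X, 0]
    have h3 : e M ∈ Ideal.span {(Polynomial.X : Polynomial R)} ^ 2 := by
      have := Ideal.mem_map_of_mem e h2
      rw [Ideal.map_pow] at this
      refine Ideal.pow_right_mono ?_ 2 this
      rw [Ideal.map_span, Ideal.span_le]
      rintro _ ⟨_, ⟨j, rfl⟩, rfl⟩
      fin_cases j <;> simp [e]
    rw [Ideal.span_singleton_pow, Ideal.mem_span_singleton, Polynomial.X_pow_dvd_iff] at h3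
    have h4 := h3 1 (by norm_num)
    have h5 : e M = Polynomial.C (c₂ ^ i) * Polynomial.X := by
      simp [e, hM]
      ring
    rw [h5] at h4
    rw [Polynomial.coeff_C_mul, Polynomial.coeff_X_one, mul_one] at h4
    exact pow_ne_zero i hc h4
  rw [key] at h hM2 ⊢
  rw [MvPolynomial.coe_mul, MvPowerSeries.order_mul] at h
  push Not at hM2
  have h6 : (M : MvPowerSeries (Fin 2) R).order ≤ 1 := by
    exact Order.le_of_lt_succ (by simpa [one_add_one_eq_two] using hM2)
  have h7 : ((n : ℕ∞) + 1) ≤ (G : MvPowerSeries (Fin 2) R).order + 1 := by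
    refine le_trans ?_ (h.trans (add_le_add_right h6 _))
    simp
  exact (ENat.add_le_add_iff_right (by simp)).1 h7

open MvPolynomial in
theorem aux_ker {S L K : Type*} [CommRing S] [Field L] [Algebra S L] [IsFractionRing S L]
    [Field K] [Algebra L K] [Algebra S K] [IsScalarTower S L K] {p : ℕ} (hp : 0 < p)
    {f g h₁ h₂ : S} {ω μ : K} (hω : ω ^ p = algebraMap S K f) (hμ : μ ^ p = algebraMap S K g)
    (hKgen : Algebra.adjoin L ({ω, μ} : Set K) = ⊤)
    (hdeg : Module.finrank L K = p ^ 2) (G : MvPolynomial (Fin 2) S)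
    (hG : aeval ![ω - algebraMap S K h₁, μ - algebraMap S K h₂] G = 0) :
    G ∈ Ideal.span {(X 0 + C h₁) ^ p - C f, (X 1 + C h₂) ^ p - C g} := by
  have hgen : Algebra.adjoin S {(X 0 + C h₁ : MvPolynomial (Fin 2) S), X 1 + C h₂} = ⊤ := by
    rw [eq_top_iff, ← MvPolynomial.adjoin_range_X, Algebra.adjoin_le_iff]
    rintro _ ⟨j, rfl⟩
    set D := Algebra.adjoin S {(X 0 + C h₁ : MvPolynomial (Fin 2) S), X 1 + C h₂}
    have h0 : (X 0 + C h₁ : MvPolynomial (Fin 2) S) ∈ D := Algebra.subset_adjoin (by simp)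
    have h1 : (X 1 + C h₂ : MvPolynomial (Fin 2) S) ∈ D := Algebra.subset_adjoin (by simp)
    have c1 : (C h₁ : MvPolynomial (Fin 2) S) ∈ D := D.algebraMap_mem h₁
    have c2 : (C h₂ : MvPolynomial (Fin 2) S) ∈ D := D.algebraMap_mem h₂
    fin_cases j
    · simpa using D.sub_mem h0 c1
    · simpa using D.sub_mem h1 c2
  obtain ⟨c, hc⟩ := aux_reduce hp f g (X 0 + C h₁ : MvPolynomial (Fin 2) S) (X 1 + C h₂) hgen G
  rw [algebraMap_eq] at hc
  have hli : LinearIndependent L (fun j : Fin p × Fin p => ω ^ (j.1 : ℕ) * μ ^ (j.2 : ℕ)) := by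
    apply linearIndependent_of_top_le_span_of_card_eq_finrank
    · intro x _
      obtain ⟨d, hd⟩ := aux_reduce hp (algebraMap S L f) (algebraMap S L g) ω μ hKgen x
      rw [← IsScalarTower.algebraMap_apply, ← IsScalarTower.algebraMap_apply, hω, hμ] at hd
      simp only [sub_self, Set.insert_eq_of_mem, Set.mem_singleton_iff,
        Ideal.span_singleton_eq_bot.2, Ideal.mem_bot] at hd
      rw [sub_eq_zero.1 hd]
      exact Submodule.sum_mem _ fun j _ =>
        Submodule.smul_mem _ _ (Submodule.subset_span ⟨j, rfl⟩)
    · simp [hdeg, sq]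
  have hz : aeval ![ω - algebraMap S K h₁, μ - algebraMap S K h₂]
      (G - ∑ j, c j • ((X 0 + C h₁ : MvPolynomial (Fin 2) S) ^ (j.1 : ℕ) * (X 1 + C h₂) ^ (j.2 : ℕ))) = 0 := by
    have : Ideal.span {(X 0 + C h₁ : MvPolynomial (Fin 2) S) ^ p - C f, (X 1 + C h₂) ^ p - C g} ≤
        RingHom.ker (aeval ![ω - algebraMap S K h₁, μ - algebraMap S K h₂] :
          MvPolynomial (Fin 2) S →ₐ[S] K) := by
      rw [Ideal.span_le]
      rintro _ (rfl | rfl) <;> simp [RingHom.mem_ker, hω, hμ]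
    exact this hc
  rw [map_sub, hG] at hz
  simp at hz
  have hc0 : ∀ j, algebraMap S L (c j) = 0 := by
    refine Fintype.linearIndependent_iff.1 hli (fun j => algebraMap S L (c j)) ?_
    simpa [Algebra.smul_def, ← IsScalarTower.algebraMap_apply] using hz
  have hc1 : ∀ j, c j = 0 := fun j =>
    IsFractionRing.injective S L (by rw [hc0 j, map_zero])
  simpa [hc1] using hc

open MvPolynomial in
theorem aux_main {S L K : Type*} [CommRing S] [Field L] [Algebra S L] [IsFractionRing S L]
    [Field K] [Algebra L K] [Algebra S K] [IsScalarTower S L K] {p : ℕ} (hp : p.Prime)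
    (hpS : Prime ((p : ℕ) : S))
    {f g h₁ h₂ a b : S} (hf : f = h₁ ^ p + a * (p : S)) (hg : g = h₂ ^ p + b * (p : S))
    {ω μ : K} (hω : ω ^ p = algebraMap S K f) (hμ : μ ^ p = algebraMap S K g)
    (hKgen : Algebra.adjoin L ({ω, μ} : Set K) = ⊤)
    (hdeg : Module.finrank L K = p ^ 2) (hh : ¬ (p : S) ∣ h₂) (i : ℕ)
    {A : Type*} [CommRing A] [Algebra S A] (ι : A →ₐ[S] K)
    (w u : A) (hw : ι w = ω) (hu : ι u = μ) (hA : Algebra.adjoin S {w, u} = ⊤) (x : A)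
    (hx : x * (w * u ^ i - algebraMap S A (h₁ * h₂ ^ i)) ∈
      Ideal.span {(p : A)} + Ideal.span {(p : A), w - algebraMap S A h₁, u - algebraMap S A h₂} ^ p) :
    x ∈ Ideal.span {(p : A)} +
      Ideal.span {(p : A), w - algebraMap S A h₁, u - algebraMap S A h₂} ^ (p - 1) := by
  let φ : MvPolynomial (Fin 2) S →ₐ[S] A := aeval ![w - algebraMap S A h₁, u - algebraMap S A h₂]
  have hφ0 : φ (X 0) = w - algebraMap S A h₁ := by simp [φ]
  have hφ1 : φ (X 1) = u - algebraMap S A h₂ := by simp [φ]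
  have hφC : ∀ s, φ (C s) = algebraMap S A s := by simp [φ]
  have hφp : φ (p : MvPolynomial (Fin 2) S) = (p : A) := by simp
  have hsurj : Function.Surjective φ := by
    rw [← AlgHom.range_eq_top, eq_top_iff, ← hA, Algebra.adjoin_le_iff]
    rintro _ (rfl | rfl)
    · exact ⟨X 0 + C h₁, by change φ _ = _; rw [map_add, hφ0, hφC]; ring⟩
    · exact ⟨X 1 + C h₂, by change φ _ = _; rw [map_add, hφ1, hφC]; ring⟩
  have hker : ∀ G, φ G = 0 → G ∈ Ideal.span {(X 0 + C h₁) ^ p - C f, (X 1 + C h₂) ^ p - C g} := by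
    intro G hG
    apply aux_ker hp.pos hω hμ hKgen hdeg
    have : (aeval ![ω - algebraMap S K h₁, μ - algebraMap S K h₂] :
        MvPolynomial (Fin 2) S →ₐ[S] K) = ι.comp φ := by
      ext j; fin_cases j <;> simp [φ, hw, hu]
    rw [this, AlgHom.comp_apply, hG, map_zero]
  have hmap : ∀ n : ℕ, (Ideal.span {(p : MvPolynomial (Fin 2) S)} +
      Ideal.span {(p : MvPolynomial (Fin 2) S), X 0, X 1} ^ n).map φ = Ideal.span {(p : A)} +
      Ideal.span {(p : A), w - algebraMap S A h₁, u - algebraMap S A h₂} ^ n := by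
    intro n
    rw [Ideal.add_eq_sup, Ideal.map_sup, Ideal.map_pow, Ideal.map_span, Ideal.map_span]
    simp only [Set.image_singleton, Set.image_insert_eq, hφ0, hφ1, hφp, Ideal.add_eq_sup]
  rw [← hmap] at hx ⊢
  obtain ⟨G, rfl⟩ := hsurj x
  apply Ideal.mem_map_of_mem
  set M : MvPolynomial (Fin 2) S := (X 0 + C h₁) * (X 1 + C h₂) ^ i - C (h₁ * h₂ ^ i) with hM
  have hφM : φ M = w * u ^ i - algebraMap S A (h₁ * h₂ ^ i) := by
    rw [hM, map_sub, map_mul, map_pow, map_add, map_add, hφC, hφC, hφC, hφ0, hφ1]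
    simp
  rw [← hφM, ← map_mul] at hx
  obtain ⟨E, hE, hEG⟩ := (Ideal.mem_map_iff_of_surjective φ hsurj).1 hx
  have hk := hker (G * M - E) (by rw [map_sub, hEG, sub_self])
  let R := S ⧸ Ideal.span {(p : S)}
  haveI : (Ideal.span {(p : S)}).IsPrime := (Ideal.span_singleton_prime hpS.ne_zero).2 hpS
  let π : MvPolynomial (Fin 2) S →+* MvPolynomial (Fin 2) R := map (Ideal.Quotient.mk _)
  have hp0 : (p : R) = 0 := by
    have : Ideal.Quotient.mk (Ideal.span {(p : S)}) (p : S) = 0 :=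
      Ideal.Quotient.eq_zero_iff_mem.2 (Ideal.mem_span_singleton_self _)
    simpa using this
  have hpp : (p : MvPolynomial (Fin 2) R) = 0 := by
    rw [← map_natCast (C : R →+* MvPolynomial (Fin 2) R), hp0, map_zero]
  haveI : CharP (MvPolynomial (Fin 2) R) p := by
    have : Nontrivial (MvPolynomial (Fin 2) R) := inferInstance
    exact ringChar.of_eq (CharP.ringChar_of_prime_eq_zero hp hpp)
  haveI : Fact p.Prime := ⟨hp⟩
  set V := idealOfVars (Fin 2) R with hV
  have hXV : ∀ j, (X j : MvPolynomial (Fin 2) R) ∈ V := fun j => Ideal.subset_span ⟨j, rfl⟩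
  have e1 : π E ∈ V ^ p := by
    have h1 := Ideal.mem_map_of_mem π hE
    rw [Ideal.add_eq_sup, Ideal.map_sup, Ideal.map_pow, Ideal.map_span, Ideal.map_span] at h1
    refine (sup_le ?_ ?_ : _ ≤ V ^ p) h1
    · simp [hpp]
    · apply Ideal.pow_right_mono
      rw [Ideal.span_le]
      rintro _ ⟨_, (rfl | rfl | rfl), rfl⟩
      · simp [hpp]
      · simpa [π] using hXV 0
      · simpa [π] using hXV 1
  have e2 : π (G * M - E) ∈ V ^ p := by
    have h1 := Ideal.mem_map_of_mem π hk
    refine (?_ : _ ≤ V ^ p) h1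
    rw [Ideal.map_span, Ideal.span_le]
    have hCp : ∀ s : S, π (C (s * (p : S))) = 0 := by
      intro s; simp [π, hpp]
    rintro _ ⟨_, (rfl | rfl), rfl⟩
    · rw [hf, C_add, map_sub, map_add, hCp, map_pow, map_add, add_pow_char]
      simpa [π] using Ideal.pow_mem_pow (hXV 0) p
    · rw [hg, C_add, map_sub, map_add, hCp, map_pow, map_add, add_pow_char]
      simpa [π] using Ideal.pow_mem_pow (hXV 1) p
  have e3 : π G * π M ∈ V ^ (p - 1 + 1) := by
    rw [Nat.sub_add_cancel hp.one_le, ← map_mul]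
    have := Ideal.add_mem _ e2 e1
    rwa [← map_add, sub_add_cancel] at this
  have hc2 : (Ideal.Quotient.mk (Ideal.span {(p : S)}) h₂) ≠ 0 := by
    rw [Ne, Ideal.Quotient.eq_zero_iff_mem, Ideal.mem_span_singleton]; exact hh
  have e4 : π G ∈ V ^ (p - 1) := by
    refine aux_order (Ideal.Quotient.mk (Ideal.span {(p : S)}) h₁) _ hc2 i (p - 1) (π G) ?_
    convert e3 using 2
    simp [hM, π]
  have hVm : V = (Ideal.span {(X 0 : MvPolynomial (Fin 2) S), X 1}).map π := by
    rw [hV, idealOfVars, Ideal.map_span, Set.image_pair]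
    congr 1
    ext y
    simp [π, Fin.exists_fin_two, eq_comm]
  rw [hVm, ← Ideal.map_pow] at e4
  have hπs : Function.Surjective π := map_surjective _ Ideal.Quotient.mk_surjective
  obtain ⟨F, hF, hFG⟩ := (Ideal.mem_map_iff_of_surjective π hπs).1 e4
  have hd : G - F ∈ RingHom.ker π := by rw [RingHom.mem_ker, map_sub, hFG, sub_self]
  have hd2 : G - F ∈ Ideal.span {(p : MvPolynomial (Fin 2) S)} := by
    have : RingHom.ker π = Ideal.span {(p : MvPolynomial (Fin 2) S)} := by
      change RingHom.ker (map (Ideal.Quotient.mk (Ideal.span {(p : S)}))) = _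
      rw [ker_map, Ideal.mk_ker, Ideal.map_span]
      simp
    rwa [this] at hd
  rw [← sub_add_cancel G F]
  refine Submodule.add_mem_sup hd2 (Ideal.pow_right_mono (Ideal.span_mono ?_) _ hF)
  exact Set.subset_insert _ _

theorem stmt18
    {S : Type*} [CommRing S] [IsDomain S] [IsNoetherianRing S] [IsLocalRing S]
    [IsIntegrallyClosed S]
    {L : Type*} [Field L] [CharZero L] [Algebra S L] [IsFractionRing S L]
    {K : Type*} [Field K] [Algebra L K] [Algebra S K] [IsScalarTower S L K]
    {p : ℕ} (hp : p.Prime) (hp3 : 3 ≤ p) (hpS : Prime ((p : ℕ) : S))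
    (hSmodp : IsIntegrallyClosed (S ⧸ Ideal.span {((p : ℕ) : S)}))
    (hreg : ∃ s : Finset S, Ideal.span (s : Set S) = IsLocalRing.maximalIdeal S ∧
      (s.card : WithBot ℕ∞) = ringKrullDim S)
    (hmix : ((p : ℕ) : S) ∈ IsLocalRing.maximalIdeal S ∧
      ((p : ℕ) : S) ∉ IsLocalRing.maximalIdeal S ^ 2)
    {f g h₁ h₂ a b : S} (hf : f = h₁ ^ p + a * (p : S)) (hg : g = h₂ ^ p + b * (p : S))
    (hfg : (¬IsUnit f ∧ ¬IsUnit g ∧ PaperSquarefree f ∧ PaperSquarefree g ∧ SatisfiesA1 f g) ∨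
      (IsUnit f ∧ IsUnit g ∧ (∀ x : S, x ^ p ≠ f) ∧ (∀ x : S, x ^ p ≠ g)))
    {ω μ : K} (hω : ω ^ p = algebraMap S K f) (hμ : μ ^ p = algebraMap S K g)
    (hKgen : Algebra.adjoin L ({ω, μ} : Set K) = ⊤)
    (hdeg : Module.finrank L K = p ^ 2)
    (hicω : IsIntegrallyClosed (Algebra.adjoin S ({ω} : Set K)))
    (hicμ : IsIntegrallyClosed (Algebra.adjoin S ({μ} : Set K)))
    (hh₁ : h₁ ≠ 0) (hh₂ : h₂ ≠ 0)
    (i : ℕ) (hi1 : 1 ≤ i) (hi2 : i ≤ p - 1)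
    (hfgi : ∃ x y : S, f * g ^ i = x ^ p + y * (p : S) ^ 2)
    (hgrade : ContainsRegSeq3 S (Ideal.span {((p : ℕ) : S), f, g})) :
    Submodule.colon
        ((Ideal.span {(p : Algebra.adjoin S ({ω, μ} : Set K))} + Pid p ω μ h₁ h₂ ^ p : Ideal (Algebra.adjoin S ({ω, μ} : Set K))) :
          Submodule (Algebra.adjoin S ({ω, μ} : Set K)) (Algebra.adjoin S ({ω, μ} : Set K)))
        ((Ideal.span {omegaA ω μ * muA ω μ ^ i - algebraMap S _ (h₁ * h₂ ^ i)} : Ideal (Algebra.adjoin S ({ω, μ} : Set K))) :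
          Set (Algebra.adjoin S ({ω, μ} : Set K))) =
      Ideal.span {(p : Algebra.adjoin S ({ω, μ} : Set K))} + Pid p ω μ h₁ h₂ ^ (p - 1) := by
  have hpm := hmix.1
  have hh : ¬ (p : S) ∣ h₂ := by
    intro hd
    have hg' : (p : S) ∣ g := by
      rw [hg]
      exact dvd_add (dvd_pow hd hp.ne_zero) (Dvd.intro_left _ rfl)
    have hgm : g ∈ IsLocalRing.maximalIdeal S := Ideal.mem_of_dvd _ hg' hpm
    rcases hfg with ⟨hfu, -⟩ | ⟨-, hgu, -⟩
    · have hfm : f ∈ IsLocalRing.maximalIdeal S := hfu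
      obtain ⟨rs, h3, hmem, hr⟩ := hgrade
      refine aux_grade (u := (p : S)) (v := f) ?_ rs h3 ?_ hr
      · intro htop
        apply (IsLocalRing.maximalIdeal.isMaximal S).ne_top
        rw [eq_top_iff, ← htop, Ideal.span_le]
        rintro _ (rfl | rfl)
        · exact hpm
        · exact hfm
      · intro r hrr
        refine (Ideal.span_le.2 ?_ : Ideal.span {((p : ℕ) : S), f, g} ≤ _) (hmem r hrr)
        rintro _ (rfl | rfl | rfl)
        · exact Ideal.subset_span (by simp)
        · exact Ideal.subset_span (by simp)
        · exact Ideal.mem_of_dvd _ hg' (Ideal.subset_span (by simp))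
    · exact hgm hgu
  have hgenA : Algebra.adjoin S {omegaA (S := S) ω μ, muA ω μ} = ⊤ := by
    rw [eq_top_iff]
    rintro ⟨x, hx⟩ -
    induction hx using Algebra.adjoin_induction with
    | mem x hx =>
      rcases hx with rfl | rfl
      · exact Algebra.subset_adjoin (Set.mem_insert _ _)
      · exact Algebra.subset_adjoin (Set.mem_insert_of_mem _ rfl)
    | algebraMap r => exact Subalgebra.algebraMap_mem _ r
    | add x y hx hy ihx ihy => exact Subalgebra.add_mem _ ihx ihy
    | mul x y hx hy ihx ihy => exact Subalgebra.mul_mem _ ihx ihy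
  ext x
  rw [Ideal.mem_colon_span_singleton]
  constructor
  · intro hx
    exact aux_main hp hpS hf hg hω hμ hKgen hdeg hh i
      (Algebra.adjoin S ({ω, μ} : Set K)).val
      (omegaA ω μ) (muA ω μ) rfl rfl hgenA x hx
  · intro hx
    obtain ⟨y, hy, z, hz, rfl⟩ := Submodule.mem_sup.1 hx
    rw [add_mul]
    refine Submodule.add_mem_sup (Ideal.mul_mem_right _ _ hy) ?_
    rw [← pow_sub_one_mul hp.ne_zero (Pid p ω μ h₁ h₂)]
    refine Ideal.mul_mem_mul hz ?_
    have h1 : omegaA ω μ - algebraMap S _ h₁ ∈ Pid p ω μ h₁ h₂ := Ideal.subset_span (by simp)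
    have h2 : muA ω μ - algebraMap S _ h₂ ∈ Pid p ω μ h₁ h₂ := Ideal.subset_span (by simp)
    rw [← Ideal.Quotient.eq] at h1 h2 ⊢
    rw [map_mul, map_pow, h1, h2, map_mul (algebraMap S _), map_pow (algebraMap S _), map_mul, map_pow]
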